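/- Let K be a positive integer. For each k ∈ {1,…,K}, let π_k ≥ 0 with Σ_{k=1}^K π_k = 1 and π_k > 0 for some k, let c_k ∈ ℝ^L, let Γ_k ∈ ℝ^{L×L} be symmetric positive definite, let a_{dk} ∈ ℝ^L and b_{dk} ∈ ℝ for 1 ≤ d ≤ D. Define g_k : ℝ^L → ℝ by g_k(x) = N(x; c_k, Γ_k) · Π_{d=1}^{D} Π_{t=1}^{T} N¹(y'_{dt}; a_{dk}ᵀ x + b_{dk}, σ_d²)^{χ_{dt}}, define P_k = Γ_k⁻¹ + Σ_{d,t} (χ_{dt}/σ_d²) a_{dk} a_{dk}ᵀ, V_k = P_k⁻¹, μ_k = V_k (Γ_k⁻¹ c_k + Σ_{d,t} (χ_{dt}/σ_d²) a_{dk} (y'_{dt} − b_{dk})), and unnormalized weights w_k = π_k · ((det V_k)^{1/2} / (det Γ_k)^{1/2}) · exp(−(1/2) (Σ_{d,t} (χ_{dt}/σ_d²) (y'_{dt} − b_{dk})² + c_kᵀ Γ_k⁻¹ c_k − μ_kᵀ V_k⁻¹ μ_k)), with ν_k = w_k / Σ_{j=1}^K w_j. Then Σ_{j=1}^K w_j >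 0, the function Σ_{k=1}^K π_k g_k is Lebesgue integrable on ℝ^L with positive integral, and for every x ∈ ℝ^L, (Σ_{k=1}^K π_k g_k(x)) / ∫_{ℝ^L} Σ_{k=1}^K π_k g_k(x') dx' = Σ_{k=1}^K ν_k N(x; μ_k, V_k). -/

import Mathlib

open Matrix MeasureTheory Real BigOperators

/-- Multivariate Gaussian density `N(x; m, S)` on `ℝ^L`. -/
noncomputable def gaussN {L : ℕ} (m : Fin L → ℝ) (S : Matrix (Fin L) (Fin L) ℝ)
    (x : Fin L → ℝ) : ℝ :=
  (2 * Real.pi) ^ (-(L : ℝ) / 2) * S.det ^ (-(1 : ℝ) / 2) *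
    Real.exp (-(1/2) * ((x - m) ⬝ᵥ S⁻¹.mulVec (x - m)))

/-- Scalar Gaussian density `N¹(y; m, s²)`. -/
noncomputable def gaussN1 (y m s2 : ℝ) : ℝ :=
  (2 * Real.pi * s2) ^ (-(1 : ℝ) / 2) * Real.exp (-(y - m) ^ 2 / (2 * s2))

/-!
Each component is a conjugate Gaussian update. The likelihood `∏ N¹(y_i; a_i · x + b_i, s_i)^χ_i`
is a constant times `exp (-½ ∑ (χ_i / s_i) (y_i - b_i - a_i · x)²)`, and completing the square in
`x` turns the prior density times this exponential into a scalar multiple of `N(x; μ, V)`. The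
constant involves only the noise variances, which the components share, so it cancels when the
mixture is normalised; since `N(x; μ, V)` has integral one, what remains is the mixture with
weights proportional to the scalars. The integral itself comes from the substitution
`z = √(S⁻¹) (x - m)`.
-/

section GaussianIntegral

variable {n : Type*} [Fintype n]

theorem integral_exp_neg_half_dotProduct_self :
    ∫ x : n → ℝ, exp (-(1 / 2) * (x ⬝ᵥ x)) = (2 * π) ^ ((Fintype.card n : ℝ) / 2) := by
  have hprod (x : n → ℝ) :
      exp (-(1 / 2) * (x ⬝ᵥ x)) = ∏ i, exp (-(1 / 2) * x i ^ 2) := by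
    simp only [← exp_sum, ← Finset.mul_sum, dotProduct, sq]
  simp_rw [hprod]
  rw [integral_fintype_prod_volume_eq_pow (fun t : ℝ => exp (-(1 / 2) * t ^ 2)),
    integral_gaussian, sqrt_eq_rpow, ← rpow_natCast, ← rpow_mul (by positivity)]
  congr 1 <;> ring

variable [DecidableEq n]

theorem integral_comp_mulVec {E : Type*} [NormedAddCommGroup E] [NormedSpace ℝ E]
    {M : Matrix n n ℝ} (hM : M.det ≠ 0) (F : (n → ℝ) → E) :
    ∫ x, F (M *ᵥ x) = |M.det|⁻¹ • ∫ x, F x := by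
  have hcont : Continuous (M *ᵥ ·) := by fun_prop
  have hinj : Function.Injective (M *ᵥ ·) :=
    mulVec_injective_of_isUnit ((isUnit_iff_isUnit_det M).2 hM.isUnit)
  have hmap : Measure.map (M *ᵥ ·) volume = ENNReal.ofReal |M.det⁻¹| • volume :=
    Real.map_matrix_volume_pi_eq_smul_volume_pi hM
  rw [← (hcont.measurableEmbedding hinj).integral_map, hmap, integral_smul_measure,
    ENNReal.toReal_ofReal (abs_nonneg _), abs_inv]

open scoped MatrixOrder in
theorem integral_exp_neg_half_dotProduct_mulVec {A : Matrix n n ℝ} (hA : A.PosDef) :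
    ∫ x : n → ℝ, exp (-(1 / 2) * (x ⬝ᵥ A *ᵥ x)) =
      (2 * π) ^ ((Fintype.card n : ℝ) / 2) * A.det ^ (-(1 : ℝ) / 2) := by
  set B := CFC.sqrt A
  have hBB : B * B = A := CFC.sqrt_mul_sqrt_self A hA.posSemidef.nonneg
  have hBT : Bᵀ = B := by
    simpa using (nonneg_iff_posSemidef.1 (CFC.sqrt_nonneg A)).isHermitian.eq
  have hdet : B.det = √A.det := by simpa using hA.posSemidef.det_sqrt
  have hquad (x : n → ℝ) : x ⬝ᵥ A *ᵥ x = (B *ᵥ x) ⬝ᵥ (B *ᵥ x) := by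
    rw [← hBB, ← mulVec_mulVec, dotProduct_mulVec, ← mulVec_transpose, hBT]
  have hdet_pos : 0 < B.det := hdet ▸ sqrt_pos.2 hA.det_pos
  simp_rw [hquad]
  rw [integral_comp_mulVec hdet_pos.ne' fun z => exp (-(1 / 2) * (z ⬝ᵥ z)),
    integral_exp_neg_half_dotProduct_self, abs_of_pos hdet_pos, hdet, sqrt_eq_rpow,
    ← rpow_neg hA.det_pos.le, smul_eq_mul, mul_comm, neg_div]

theorem integral_gaussN {L : ℕ} (m : Fin L → ℝ) {S : Matrix (Fin L) (Fin L) ℝ} (hS : S.PosDef) :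
    ∫ x, gaussN m S x = 1 := by
  simp only [gaussN]
  rw [integral_const_mul,
    integral_sub_right_eq_self (fun x => exp (-(1 / 2) * (x ⬝ᵥ S⁻¹ *ᵥ x))) m,
    integral_exp_neg_half_dotProduct_mulVec hS.inv, Fintype.card_fin, det_nonsing_inv,
    Ring.inverse_eq_inv', inv_rpow hS.det_pos.le, neg_div, rpow_neg (by positivity)]
  have hdet := rpow_pos_of_pos hS.det_pos (-(1 / 2 : ℝ))
  rw [neg_div]
  field_simp

end GaussianIntegral

section Mixture

variable {α κ : Type*} [MeasurableSpace α] [Fintype κ] {m : Measure α} {p : κ → α → ℝ}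

theorem integral_mixture (hp : ∀ k, ∫ x, p k x ∂m = 1) (w : κ → ℝ) :
    ∫ x, ∑ k, w k * p k x ∂m = ∑ k, w k := by
  rw [integral_finsetSum _ fun k _ => (integrable_of_integral_eq_one (hp k)).const_mul (w k)]
  simp_rw [integral_const_mul, hp, mul_one]

theorem integrable_mixture (hp : ∀ k, Integrable (p k) m) (w : κ → ℝ) :
    Integrable (fun x => ∑ k, w k * p k x) m :=
  integrable_finsetSum _ fun k _ => (hp k).const_mul (w k)

theorem div_integral_const_mul_mixture (hp : ∀ k, ∫ x, p k x ∂m = 1) (w : κ → ℝ) {C : ℝ}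
    (hC : C ≠ 0) (x : α) :
    (C * ∑ k, w k * p k x) / ∫ x', C * ∑ k, w k * p k x' ∂m =
      ∑ k, w k / (∑ j, w j) * p k x := by
  rw [integral_const_mul, integral_mixture hp, mul_div_mul_left _ _ hC, Finset.sum_div]
  simp_rw [div_mul_eq_mul_div]

end Mixture

section CompleteSquare

variable {R n ι : Type*} [CommRing R] [Fintype ι]

theorem isSymm_sum_smul_vecMulVec (q : ι → R) (a : ι → n → R) :
    (∑ i, q i • vecMulVec (a i) (a i)).IsSymm := by
  simp only [IsSymm, transpose_sum, transpose_smul, transpose_vecMulVec]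

variable [Fintype n]

theorem sub_dotProduct_mulVec_sub {A : Matrix n n R} (hA : A.IsSymm) (x c : n → R) :
    (x - c) ⬝ᵥ A *ᵥ (x - c) = x ⬝ᵥ A *ᵥ x - 2 * (x ⬝ᵥ A *ᵥ c) + c ⬝ᵥ A *ᵥ c := by
  have hcomm : c ⬝ᵥ A *ᵥ x = x ⬝ᵥ A *ᵥ c := by
    rw [dotProduct_mulVec, ← mulVec_transpose, hA.eq, dotProduct_comm]
  simp only [mulVec_sub, sub_dotProduct, dotProduct_sub, hcomm]
  ring

theorem dotProduct_sum_smul_vecMulVec_mulVec (q : ι → R) (a : ι → n → R) (x : n → R) :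
    x ⬝ᵥ (∑ i, q i • vecMulVec (a i) (a i)) *ᵥ x = ∑ i, q i * (a i ⬝ᵥ x) ^ 2 := by
  simp only [sum_mulVec, dotProduct_sum, smul_mulVec, vecMulVec_mulVec, op_smul_eq_smul,
    dotProduct_smul, smul_eq_mul, dotProduct_comm x (a _), sq]

theorem complete_square {A : Matrix n n R} (hA : A.IsSymm) (q r : ι → R) (a : ι → n → R)
    {P : Matrix n n R} (hP : P = A + ∑ i, q i • vecMulVec (a i) (a i)) {c m : n → R}
    (hm : P *ᵥ m = A *ᵥ c + ∑ i, (q i * r i) • a i) (x : n → R) :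
    (x - c) ⬝ᵥ A *ᵥ (x - c) + ∑ i, q i * (r i - a i ⬝ᵥ x) ^ 2 =
      (x - m) ⬝ᵥ P *ᵥ (x - m) +
        (∑ i, q i * r i ^ 2 + c ⬝ᵥ A *ᵥ c - m ⬝ᵥ P *ᵥ m) := by
  have hPsymm : P.IsSymm := hP ▸ hA.add (isSymm_sum_smul_vecMulVec q a)
  have hquadratic : x ⬝ᵥ P *ᵥ x = x ⬝ᵥ A *ᵥ x + ∑ i, q i * (a i ⬝ᵥ x) ^ 2 := by
    rw [hP, add_mulVec, dotProduct_add, dotProduct_sum_smul_vecMulVec_mulVec]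
  have hlinear : x ⬝ᵥ P *ᵥ m = x ⬝ᵥ A *ᵥ c + ∑ i, q i * r i * (a i ⬝ᵥ x) := by
    simp only [hm, dotProduct_add, dotProduct_sum, dotProduct_smul, smul_eq_mul,
      dotProduct_comm x (a _)]
  have hresidual : ∑ i, q i * (r i - a i ⬝ᵥ x) ^ 2 =
      ∑ i, q i * r i ^ 2 - 2 * ∑ i, q i * r i * (a i ⬝ᵥ x) + ∑ i, q i * (a i ⬝ᵥ x) ^ 2 := by
    rw [Finset.mul_sum, ← Finset.sum_sub_distrib, ← Finset.sum_add_distrib]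
    exact Finset.sum_congr rfl fun i _ => by ring
  rw [sub_dotProduct_mulVec_sub hA, sub_dotProduct_mulVec_sub hPsymm, hquadratic, hlinear,
    hresidual]
  ring

end CompleteSquare

section Posterior

variable {n ι : Type*} [Fintype n] [DecidableEq n] [Fintype ι]

/-- Precision (inverse covariance) `P_k` of a Gaussian vector with prior covariance `Γ`, given
scalar observations of the `a i ⬝ᵥ x` with noise precisions `q i`. In the paper `i` ranges over the
pairs `(d, t)` and `q (d, t) = χ_dt / σ_d²`, so that inactive entries contribute nothing. -/
noncomputable def posteriorPrecision (Γ : Matrix n n ℝ) (q : ι → ℝ) (a : ι → n → ℝ) :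
    Matrix n n ℝ :=
  Γ⁻¹ + ∑ i, q i • vecMulVec (a i) (a i)

/-- Covariance `V_k` of a Gaussian vector conditioned on the observations described at
`posteriorPrecision`. -/
noncomputable def posteriorCovariance (Γ : Matrix n n ℝ) (q : ι → ℝ) (a : ι → n → ℝ) :
    Matrix n n ℝ :=
  (posteriorPrecision Γ q a)⁻¹

/-- Mean `μ_k` of a Gaussian vector with prior mean `c` and prior covariance `Γ`, given
observations `r i` of the `a i ⬝ᵥ x` with noise precisions `q i`. The offsets of the affine model
have been subtracted: in the paper `r (d, t) = y'_dt - b_dk`. -/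
noncomputable def posteriorMean (c : n → ℝ) (Γ : Matrix n n ℝ) (q r : ι → ℝ) (a : ι → n → ℝ) :
    n → ℝ :=
  posteriorCovariance Γ q a *ᵥ (Γ⁻¹ *ᵥ c + ∑ i, (q i * r i) • a i)

/-- Marginal likelihood of the observations `r` under the prior `N(c, Γ)`, up to the normalising
constants of the noise densities; the weight `w_k` of the paper is `π_k` times this factor. -/
noncomputable def evidence (c : n → ℝ) (Γ : Matrix n n ℝ) (q r : ι → ℝ) (a : ι → n → ℝ) : ℝ :=
  (posteriorCovariance Γ q a).det ^ ((1 : ℝ) / 2) / Γ.det ^ ((1 : ℝ) / 2) *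
    exp (-(1 / 2) * (∑ i, q i * r i ^ 2 + c ⬝ᵥ Γ⁻¹ *ᵥ c -
      posteriorMean c Γ q r a ⬝ᵥ (posteriorCovariance Γ q a)⁻¹ *ᵥ posteriorMean c Γ q r a))

theorem posDef_posteriorPrecision {Γ : Matrix n n ℝ} (hΓ : Γ.PosDef) {q : ι → ℝ}
    (hq : ∀ i, 0 ≤ q i) (a : ι → n → ℝ) : (posteriorPrecision Γ q a).PosDef := by
  refine hΓ.inv.add_posSemidef (posSemidef_sum _ fun i _ => ?_)
  simpa using (posSemidef_vecMulVec_self_star (a i)).smul (hq i)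

theorem inv_posteriorCovariance {Γ : Matrix n n ℝ} {q : ι → ℝ} {a : ι → n → ℝ}
    (hP : IsUnit (posteriorPrecision Γ q a).det) :
    (posteriorCovariance Γ q a)⁻¹ = posteriorPrecision Γ q a :=
  nonsing_inv_nonsing_inv _ hP

theorem posteriorPrecision_mulVec_posteriorMean {Γ : Matrix n n ℝ} {q : ι → ℝ} {a : ι → n → ℝ}
    (hP : IsUnit (posteriorPrecision Γ q a).det) (c : n → ℝ) (r : ι → ℝ) :
    posteriorPrecision Γ q a *ᵥ posteriorMean c Γ q r a =
      Γ⁻¹ *ᵥ c + ∑ i, (q i * r i) • a i := by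
  rw [posteriorMean, posteriorCovariance, mulVec_mulVec, mul_nonsing_inv _ hP, one_mulVec]

theorem evidence_pos {Γ : Matrix n n ℝ} (hΓ : Γ.PosDef) {q : ι → ℝ} {a : ι → n → ℝ}
    (hP : (posteriorPrecision Γ q a).PosDef) (c : n → ℝ) (r : ι → ℝ) :
    0 < evidence c Γ q r a := by
  have hV : 0 < (posteriorCovariance Γ q a).det := hP.inv.det_pos
  have hΓdet := hΓ.det_pos
  unfold evidence
  positivity

theorem gaussN_mul_exp_eq_evidence_mul_gaussN {L : ℕ} {Γ : Matrix (Fin L) (Fin L) ℝ}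
    (hΓ : Γ.PosDef) {q : ι → ℝ} {a : ι → Fin L → ℝ} (hP : (posteriorPrecision Γ q a).PosDef)
    (c : Fin L → ℝ) (r : ι → ℝ) (x : Fin L → ℝ) :
    gaussN c Γ x * exp (-(1 / 2) * ∑ i, q i * (r i - a i ⬝ᵥ x) ^ 2) =
      evidence c Γ q r a *
        gaussN (posteriorMean c Γ q r a) (posteriorCovariance Γ q a) x := by
  have hPu : IsUnit (posteriorPrecision Γ q a).det := hP.det_pos.ne'.isUnit
  have hV : 0 < (posteriorCovariance Γ q a).det := hP.inv.det_pos
  have hsq := complete_square (P := posteriorPrecision Γ q a)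
    (isHermitian_iff_isSymm.1 hΓ.inv.isHermitian) q r a rfl
    (posteriorPrecision_mulVec_posteriorMean hPu c r) x
  rw [gaussN, mul_assoc, ← exp_add, ← mul_add, hsq, mul_add, exp_add, evidence, gaussN,
    inv_posteriorCovariance hPu, neg_div 2 (1 : ℝ), rpow_neg hΓ.det_pos.le, rpow_neg hV.le]
  field_simp

theorem gaussN1_rpow {s : ℝ} (hs : 0 ≤ s) (y m p : ℝ) :
    gaussN1 y m s ^ p =
      (2 * π * s) ^ (-p / 2) * exp (-(1 / 2) * (p / s * (y - m) ^ 2)) := by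
  rw [gaussN1, mul_rpow (by positivity) (exp_nonneg _), ← exp_mul, ← rpow_mul (by positivity)]
  congr 2 <;> ring

theorem prod_gaussN1_rpow {s : ι → ℝ} (hs : ∀ i, 0 ≤ s i) (y m χ : ι → ℝ) :
    ∏ i, gaussN1 (y i) (m i) (s i) ^ χ i =
      (∏ i, (2 * π * s i) ^ (-χ i / 2)) *
        exp (-(1 / 2) * ∑ i, χ i / s i * (y i - m i) ^ 2) := by
  simp_rw [Finset.mul_sum, exp_sum, ← Finset.prod_mul_distrib, gaussN1_rpow (hs _)]

theorem gaussN_mul_prod_gaussN1_rpow {L : ℕ} {Γ : Matrix (Fin L) (Fin L) ℝ} (hΓ : Γ.PosDef)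
    {χ s : ι → ℝ} (hs : ∀ i, 0 ≤ s i) {a : ι → Fin L → ℝ}
    (hP : (posteriorPrecision Γ (fun i => χ i / s i) a).PosDef) (y b : ι → ℝ)
    (c x : Fin L → ℝ) :
    gaussN c Γ x * ∏ i, gaussN1 (y i) (a i ⬝ᵥ x + b i) (s i) ^ χ i =
      (∏ i, (2 * π * s i) ^ (-χ i / 2)) *
        (evidence c Γ (fun i => χ i / s i) (y - b) a *
          gaussN (posteriorMean c Γ (fun i => χ i / s i) (y - b) a)
            (posteriorCovariance Γ (fun i => χ i / s i) a) x) := by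
  rw [← gaussN_mul_exp_eq_evidence_mul_gaussN hΓ hP, prod_gaussN1_rpow hs, mul_left_comm]
  simp only [Pi.sub_apply, sub_sub, add_comm (b _)]

end Posterior

theorem posterior_gmm_general {L : ℕ} {ι κ : Type*} [Fintype ι] [Fintype κ]
    (y χ s : ι → ℝ) (hχ : ∀ i, 0 ≤ χ i) (hs : ∀ i, 0 < s i)
    (π' : κ → ℝ) (hπ0 : ∀ k, 0 ≤ π' k) (hπpos : ∃ k, 0 < π' k)
    (c : κ → Fin L → ℝ) (Γ : κ → Matrix (Fin L) (Fin L) ℝ) (hΓ : ∀ k, (Γ k).PosDef)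
    (a : κ → ι → Fin L → ℝ) (b : κ → ι → ℝ)
    (g : κ → (Fin L → ℝ) → ℝ)
    (hg : ∀ k x, g k x = gaussN (c k) (Γ k) x *
      ∏ i, gaussN1 (y i) (a k i ⬝ᵥ x + b k i) (s i) ^ χ i)
    (V : κ → Matrix (Fin L) (Fin L) ℝ) (μ : κ → Fin L → ℝ)
    (hV : ∀ k, V k = posteriorCovariance (Γ k) (fun i => χ i / s i) (a k))
    (hμ : ∀ k, μ k = posteriorMean (c k) (Γ k) (fun i => χ i / s i) (y - b k) (a k))
    (w : κ → ℝ)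
    (hw : ∀ k, w k = π' k * evidence (c k) (Γ k) (fun i => χ i / s i) (y - b k) (a k)) :
    (0 < ∑ j, w j) ∧
      Integrable (fun x => ∑ k, π' k * g k x) ∧
      (0 < ∫ x, ∑ k, π' k * g k x) ∧
      ∀ x, (∑ k, π' k * g k x) / (∫ x', ∑ k, π' k * g k x') =
        ∑ k, w k / (∑ j, w j) * gaussN (μ k) (V k) x := by
  have hP k : (posteriorPrecision (Γ k) (fun i => χ i / s i) (a k)).PosDef :=
    posDef_posteriorPrecision (hΓ k) (fun i => div_nonneg (hχ i) (hs i).le) (a k)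
  have hint k : ∫ x, gaussN (μ k) (V k) x = 1 := integral_gaussN (μ k) (hV k ▸ (hP k).inv)
  have hevidence k := evidence_pos (hΓ k) (hP k) (c k) (y - b k)
  have hwsum : 0 < ∑ j, w j := by
    obtain ⟨k, hk⟩ := hπpos
    exact Finset.sum_pos' (fun j _ => hw j ▸ mul_nonneg (hπ0 j) (hevidence j).le)
      ⟨k, Finset.mem_univ k, hw k ▸ mul_pos hk (hevidence k)⟩
  obtain ⟨C, hC, hmix⟩ : ∃ C : ℝ, 0 < C ∧ ∀ x,
      ∑ k, π' k * g k x = C * ∑ k, w k * gaussN (μ k) (V k) x := by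
    refine ⟨∏ i, (2 * π * s i) ^ (-χ i / 2), Finset.prod_pos fun i _ => ?_, fun x => ?_⟩
    · have := hs i
      positivity
    · rw [Finset.mul_sum]
      refine Finset.sum_congr rfl fun k _ => ?_
      rw [hg, gaussN_mul_prod_gaussN1_rpow (hΓ k) (fun i => (hs i).le) (hP k), hw, hμ, hV]
      ring
  simp_rw [hmix]
  refine ⟨hwsum, ?_, ?_, div_integral_const_mul_mixture hint w hC.ne'⟩
  · exact (integrable_mixture (fun k => integrable_of_integral_eq_one (hint k)) w).const_mul C
  · rw [integral_const_mul, integral_mixture hint]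
    positivity

/-- Theorem 1 of the paper in density form: the posterior distribution of the
multiple-direction vector `x` given the binaural spectrogram is the Gaussian
mixture `∑ k, ν_k N(x; μ_k, V_k)` whose parameters are given in closed form by
equations (12)–(15). -/
theorem posterior_gmm
    (L D T K : ℕ) (hL : 0 < L) (hD : 0 < D) (hT : 0 < T) (hK : 0 < K)
    (y' : Fin D → Fin T → ℝ)
    (χ : Fin D → Fin T → ℝ) (hχ : ∀ d t, χ d t = 0 ∨ χ d t = 1)
    (σ : Fin D → ℝ) (hσ : ∀ d, 0 < σ d)
    (π' : Fin K → ℝ) (hπ0 : ∀ k, 0 ≤ π' k) (hπ1 : ∑ k, π' k = 1)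
    (hπpos : ∃ k, 0 < π' k)
    (c : Fin K → Fin L → ℝ)
    (Γ : Fin K → Matrix (Fin L) (Fin L) ℝ) (hΓ : ∀ k, (Γ k).PosDef)
    (a : Fin D → Fin K → Fin L → ℝ) (b : Fin D → Fin K → ℝ)
    (g : Fin K → (Fin L → ℝ) → ℝ)
    (hg : ∀ k, g k = fun x => gaussN (c k) (Γ k) x *
      ∏ d, ∏ t, (gaussN1 (y' d t) (a d k ⬝ᵥ x + b d k) (σ d ^ 2)) ^ (χ d t))
    (P V : Fin K → Matrix (Fin L) (Fin L) ℝ) (μ : Fin K → Fin L → ℝ)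
    (hP : ∀ k, P k = (Γ k)⁻¹ +
      ∑ d, ∑ t, (χ d t / σ d ^ 2) • Matrix.vecMulVec (a d k) (a d k))
    (hV : ∀ k, V k = (P k)⁻¹)
    (hμ : ∀ k, μ k = (V k).mulVec ((Γ k)⁻¹.mulVec (c k) +
      ∑ d, ∑ t, ((χ d t / σ d ^ 2) * (y' d t - b d k)) • a d k))
    (w ν : Fin K → ℝ)
    (hw : ∀ k, w k = π' k * ((V k).det ^ ((1 : ℝ) / 2) / (Γ k).det ^ ((1 : ℝ) / 2)) *
      Real.exp (-(1/2) *
        ((∑ d, ∑ t, (χ d t / σ d ^ 2) * (y' d t - b d k) ^ 2)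
          + c k ⬝ᵥ (Γ k)⁻¹.mulVec (c k) - μ k ⬝ᵥ (V k)⁻¹.mulVec (μ k))))
    (hν : ∀ k, ν k = w k / ∑ j, w j) :
    (0 < ∑ j, w j) ∧
      Integrable (fun x : Fin L → ℝ => ∑ k, π' k * g k x) ∧
      (0 < ∫ x : Fin L → ℝ, ∑ k, π' k * g k x) ∧
      ∀ x, (∑ k, π' k * g k x) / (∫ x' : Fin L → ℝ, ∑ k, π' k * g k x')
        = ∑ k, ν k * gaussN (μ k) (V k) x := by
  simp only [hν]
  have hχ0 (i : Fin D × Fin T) : 0 ≤ χ i.1 i.2 := by rcases hχ i.1 i.2 with h | h <;> simp [h]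
  have hV' k : V k = posteriorCovariance (Γ k) (fun i : Fin D × Fin T => χ i.1 i.2 / σ i.1 ^ 2)
      (fun i => a i.1 k) := by
    rw [hV, hP, posteriorCovariance, posteriorPrecision, Fintype.sum_prod_type]
  have hμ' k : μ k = posteriorMean (c k) (Γ k)
      (fun i : Fin D × Fin T => χ i.1 i.2 / σ i.1 ^ 2)
      ((fun i => y' i.1 i.2) - fun i => b i.1 k) (fun i => a i.1 k) := by
    simp only [hμ, hV', posteriorMean, Fintype.sum_prod_type, Pi.sub_apply]
  exact posterior_gmm_general (fun i : Fin D × Fin T => y' i.1 i.2) (fun i => χ i.1 i.2)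
    (fun i => σ i.1 ^ 2) hχ0 (fun i => pow_pos (hσ i.1) 2) π' hπ0 hπpos c Γ hΓ
    (fun k i => a i.1 k) (fun k i => b i.1 k) g
    (fun k x => by simp only [hg, Fintype.prod_prod_type]) V μ hV' hμ' w
    (fun k => by
      simp only [hw, evidence, ← hV', ← hμ', Fintype.sum_prod_type, Pi.sub_apply, mul_assoc])
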